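/- Let (α, 𝔄) be a measurable space and let S ∈ 𝔄. Then the selection map Q on finite multisets over α, which sends a multiset D to the sub-multiset of those elements of D that lie in S (retaining multiplicities), is measurable with respect to the counting σ-algebra 𝔠 on both domain and codomain. -/

import Mathlib

open MeasureTheory

/- `bagCount F D` is `|D|_F`: the number of elements of the finite bag (multiset) `D`
that lie in the set `F`, counted with multiplicity. -/
open Classical in
noncomputable def bagCount {α : Type*} (F : Set α) (D : Multiset α) : ℕ :=
  Multiset.countP (fun a => a ∈ F) D

/-- The counting event `#(F, n)`: all finite bags `D` with `|D|_F = n`. -/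
def countingEvent {α : Type*} (F : Set α) (n : ℕ) : Set (Multiset α) :=
  {D : Multiset α | bagCount F D = n}

/-- The counting σ-algebra `𝔠` on finite bags (multisets) over a measurable space `α`:
the σ-algebra generated by the counting events `#(F, n)` for measurable `F ⊆ α` and `n ∈ ℕ`. -/
def countingSigmaAlgebra (α : Type*) [MeasurableSpace α] : MeasurableSpace (Multiset α) :=
  MeasurableSpace.generateFrom
    {A : Set (Multiset α) | ∃ (F : Set α) (n : ℕ), MeasurableSet F ∧ A = countingEvent F n}

section

variable {α : Type*}

theorem bagCount_filter (F S : Set α) [DecidablePred (· ∈ S)] (D : Multiset α) :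
    bagCount F (D.filter (· ∈ S)) = bagCount (F ∩ S) D := by
  rw [bagCount, bagCount, Multiset.countP_filter]
  congr!

variable [MeasurableSpace α]

theorem measurableSet_countingEvent {F : Set α} (hF : MeasurableSet F) (n : ℕ) :
    MeasurableSet[countingSigmaAlgebra α] (countingEvent F n) :=
  MeasurableSpace.measurableSet_generateFrom ⟨F, n, hF, rfl⟩

theorem measurable_bagCount {F : Set α} (hF : MeasurableSet F) :
    Measurable[countingSigmaAlgebra α] (bagCount F) :=
  @measurable_to_countable' _ _ _ _ (countingSigmaAlgebra α) _ (measurableSet_countingEvent hF)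

theorem measurable_countingSigmaAlgebra_iff {β : Type*} {_ : MeasurableSpace β}
    {f : β → Multiset α} :
    Measurable[_, countingSigmaAlgebra α] f ↔
      ∀ F : Set α, MeasurableSet F → Measurable fun b => bagCount F (f b) := by
  refine ⟨fun hf F hF => (measurable_bagCount hF).comp hf, fun hf => measurable_generateFrom ?_⟩
  rintro _ ⟨F, n, hF, rfl⟩
  exact hf F hF (measurableSet_singleton n)

end

/- **Statement 6.** For a measurable space `α` and a measurable set `S ⊆ α`, the
selection map sending a finite bag `D` to the sub-bag of elements of `D` lying in `S`
(retaining multiplicities) is measurable w.r.t. the counting σ-algebra on both sides. -/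
open Classical in
theorem measurable_selection {α : Type*} [MeasurableSpace α]
    (S : Set α) (hS : MeasurableSet S) :
    @Measurable (Multiset α) (Multiset α) (countingSigmaAlgebra α) (countingSigmaAlgebra α)
      (fun D : Multiset α => D.filter (fun a => a ∈ S)) := by
  refine measurable_countingSigmaAlgebra_iff.mpr fun F hF => ?_
  simp only [bagCount_filter]
  exact measurable_bagCount (hF.inter hS)
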